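/- Let T ∈ (0,∞], 1 < r₁, r₂ < ∞, 1 ≤ q₁ ≤ q₂ ≤ ∞ with (N/2)(1/q₁ - 1/q₂) + 1/2 < 1 and 1/r₁ + (N/2)(1/q₁ - 1/q₂) = 1/2 + 1/r₂. Then the operator B defined by (Bf)(t) = ∫₀ᵗ ∇e^{(t-s)Δ} f(s) ds is bounded from L^{r₁}(0,T; L^{q₁}(ℝ^N)) to L^{r₂}(0,T; L^{q₂}(ℝ^N)). -/

import Mathlib

open MeasureTheory Real
open scoped ENNReal

noncomputable section

/-- The heat kernel on `ℝ^N`. -/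
def heatKernel (N : ℕ) (t : ℝ) (x : EuclideanSpace ℝ (Fin N)) : ℝ :=
  (4 * π * t) ^ (-(N : ℝ) / 2) * Real.exp (-‖x‖ ^ 2 / (4 * t))

/-- Mixed space-time norm `‖f‖_{L^r(0,T;L^q)}` (with `T ∈ (0,∞]`, time exponent `r` finite). -/
def mixedNorm {N : ℕ} {F : Type*} [NormedAddCommGroup F] (r : ℝ) (q : ℝ≥0∞) (T : ℝ≥0∞)
    (f : ℝ → EuclideanSpace ℝ (Fin N) → F) : ℝ≥0∞ :=
  (∫⁻ t in {t : ℝ | 0 < t ∧ ENNReal.ofReal t < T}, (eLpNorm (f t) q volume) ^ r) ^ (1 / r)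

/-- The operator `B f (t) = ∫₀ᵗ ∇e^{(t-s)Δ} f(s) ds`, realized as convolution with the gradient
of the heat kernel. -/
def heatOpB {N : ℕ} (f : ℝ → EuclideanSpace ℝ (Fin N) → ℝ) (t : ℝ)
    (x : EuclideanSpace ℝ (Fin N)) : EuclideanSpace ℝ (Fin N) :=
  ∫ s in Set.Ioo 0 t, ∫ y, f s y • gradient (heatKernel N (t - s)) (x - y)

/-!
Since `‖∇K_t‖ ≤ C t^(-1/2) K_{2t}` pointwise, Young's inequality gives the smoothing estimate
`‖∇e^{tΔ} g‖_{q₂} ≤ C t^(-β) ‖g‖_{q₁}` with `β = 1/2 + (N/2)(1/q₁ - 1/q₂) < 1`. By Minkowski's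
integral inequality, `‖B f (t)‖_{q₂}` is therefore at most `C ∫₀ᵗ (t-s)^(-β) ‖f(s)‖_{q₁} ds`. The
kernel `u₊^(-β)` lies in weak `L^{1/β}` of the line, and the scaling condition
`1/r₁ + β = 1 + 1/r₂` is the exponent relation of the weak Young (Hardy-Littlewood-Sobolev)
inequality, which maps `L^{r₁}` to `L^{r₂}`. That inequality follows by splitting the kernel at a
height adapted to the level of the convolution, which gives weak-type bounds, and by
interpolating these.

No measurability of `f` is assumed, so `s ↦ ‖f(s)‖_{q₁}` enters only through its lower integral,
that is, through a largest measurable minorant, and Minkowski's inequality needs a joint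
measurability which is recovered from the continuity of `∇e^{(t-s)Δ} f(s)` in space.
-/

section Convolution

theorem lintegral_mul_le_eLpNorm_mul_eLpNorm {α : Type*} [MeasurableSpace α] {μ : Measure α}
    {f g : α → ℝ≥0∞} {p q : ℝ≥0∞} [hpq : p.HolderConjugate q] (hf : AEMeasurable f μ)
    (hg : AEMeasurable g μ) : ∫⁻ a, f a * g a ∂μ ≤ eLpNorm f p μ * eLpNorm g q μ := by
  wlog hp : p ≠ ∞ generalizing p q f g
  · obtain rfl : p = ∞ := not_not.1 hp
    have hq : q ≠ ∞ := by simp [(ENNReal.HolderConjugate.eq_top_iff_eq_one ∞ q).1 rfl]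
    simpa only [mul_comm] using this (hpq := hpq.symm) hg hf hq
  rcases eq_or_ne q ∞ with rfl | hq
  · obtain rfl : p = 1 := (ENNReal.HolderConjugate.eq_top_iff_eq_one ∞ p).1 rfl
    rw [eLpNorm_one_eq_lintegral_enorm, ← lintegral_mul_const'' _ hf.enorm]
    refine lintegral_mono_ae ?_
    filter_upwards [enorm_ae_le_eLpNormEssSup g μ] with a ha
    simpa using! mul_le_mul_right ha (f a)
  have hp0 := ENNReal.HolderConjugate.ne_zero p q
  have hq0 := ENNReal.HolderConjugate.ne_zero q p
  rw [eLpNorm_eq_lintegral_rpow_enorm_toReal hp0 hp, eLpNorm_eq_lintegral_rpow_enorm_toReal hq0 hq]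
  exact ENNReal.lintegral_mul_le_Lp_mul_Lq μ
    (ENNReal.HolderConjugate.toReal_of_ne_top hp hq) hf hg

theorem lintegral_mul_le_lintegral_rpow_mul_rpow {α : Type*} [MeasurableSpace α] {μ : Measure α}
    {f g : α → ℝ≥0∞} (hf : AEMeasurable f μ) (hg : AEMeasurable g μ) {p q r : ℝ} (hp : 1 ≤ p)
    (hq : 1 ≤ q) (hr : 0 < r) (hpqr : p⁻¹ + q⁻¹ = 1 + r⁻¹) :
    ∫⁻ a, f a * g a ∂μ ≤ (∫⁻ a, f a ^ p * g a ^ q ∂μ) ^ r⁻¹ *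
      (∫⁻ a, f a ^ p ∂μ) ^ (1 - q⁻¹) * (∫⁻ a, g a ^ q ∂μ) ^ (1 - p⁻¹) := by
  have hp0 : 0 < p := by linarith
  have hq0 : 0 < q := by linarith
  have hp1 : 0 ≤ 1 - p⁻¹ := sub_nonneg.2 (inv_le_one_of_one_le₀ hp)
  have hq1 : 0 ≤ 1 - q⁻¹ := sub_nonneg.2 (inv_le_one_of_one_le₀ hq)
  have hr1 : 0 ≤ r⁻¹ := by positivity
  have holder := ENNReal.lintegral_prod_norm_pow_le (μ := μ) (Finset.univ : Finset (Fin 3))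
    (f := ![fun a => f a ^ p * g a ^ q, fun a => f a ^ p, fun a => g a ^ q])
    (p := ![r⁻¹, 1 - q⁻¹, 1 - p⁻¹])
    (fun i _ => by fin_cases i <;> dsimp <;> fun_prop)
    (by simp only [Fin.sum_univ_three, Matrix.cons_val]; linarith)
    (by simp [Fin.forall_fin_succ, hr1, sub_nonneg.1 hp1, sub_nonneg.1 hq1])
  simp only [Fin.prod_univ_three, Matrix.cons_val] at holder
  refine holder.trans' (lintegral_mono fun a => le_of_eq ?_)
  have hfa : f a = f a ^ (p * r⁻¹) * f a ^ (p * (1 - q⁻¹)) := by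
    rw [← ENNReal.rpow_add_of_nonneg _ _ (by positivity) (by positivity), ← mul_add,
      show r⁻¹ + (1 - q⁻¹) = p⁻¹ by linarith, mul_inv_cancel₀ hp0.ne', ENNReal.rpow_one]
  have hga : g a = g a ^ (q * r⁻¹) * g a ^ (q * (1 - p⁻¹)) := by
    rw [← ENNReal.rpow_add_of_nonneg _ _ (by positivity) (by positivity), ← mul_add,
      show r⁻¹ + (1 - p⁻¹) = q⁻¹ by linarith, mul_inv_cancel₀ hq0.ne', ENNReal.rpow_one]
  simp only [ENNReal.mul_rpow_of_nonneg _ _ hr1, ← ENNReal.rpow_mul]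
  nth_rw 1 [hfa, hga]
  ring

variable {G : Type*} [AddCommGroup G] [MeasurableSpace G] [MeasurableAdd₂ G] [MeasurableNeg G]
  {μ : Measure G} [μ.IsAddLeftInvariant]

theorem lintegral_lconvolution [SFinite μ] {f g : G → ℝ≥0∞} (hf : AEMeasurable f μ)
    (hg : AEMeasurable g μ) : ∫⁻ x, (f ⋆ₗ[μ] g) x ∂μ = (∫⁻ x, f x ∂μ) * ∫⁻ x, g x ∂μ := by
  simp_rw [lconvolution_def]
  rw [lintegral_lintegral_swap (by fun_prop), ← lintegral_mul_const'' _ hf]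
  congr with y
  rw [lintegral_const_mul'' _ (by fun_prop), lintegral_add_left_eq_self]

variable [μ.IsNegInvariant]

theorem lconvolution_le_eLpNorm_mul_eLpNorm {f g : G → ℝ≥0∞} {p q : ℝ≥0∞}
    [p.HolderConjugate q] (hf : AEMeasurable f μ) (hg : AEMeasurable g μ) (x : G) :
    (f ⋆ₗ[μ] g) x ≤ eLpNorm f p μ * eLpNorm g q μ := by
  have hx := Measure.measurePreserving_sub_left μ x
  rw [← eLpNorm_comp_measurePreserving hg.aestronglyMeasurable hx]
  simpa only [lconvolution_def, neg_add_eq_sub] using!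
    lintegral_mul_le_eLpNorm_mul_eLpNorm hf
      (hg.comp_quasiMeasurePreserving hx.quasiMeasurePreserving)

theorem lintegral_lconvolution_rpow_le [SFinite μ] {f g : G → ℝ≥0∞} (hf : AEMeasurable f μ)
    (hg : AEMeasurable g μ) {p q r : ℝ} (hp : 1 ≤ p) (hq : 1 ≤ q) (hr : 0 < r)
    (hpqr : p⁻¹ + q⁻¹ = 1 + r⁻¹) :
    ∫⁻ x, (f ⋆ₗ[μ] g) x ^ r ∂μ ≤
      ((∫⁻ y, f y ^ p ∂μ) ^ p⁻¹ * (∫⁻ y, g y ^ q ∂μ) ^ q⁻¹) ^ r := by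
  have hp1 : 0 ≤ 1 - p⁻¹ := sub_nonneg.2 (inv_le_one_of_one_le₀ hp)
  have hq1 : 0 ≤ 1 - q⁻¹ := sub_nonneg.2 (inv_le_one_of_one_le₀ hq)
  set A := ∫⁻ y, f y ^ p ∂μ
  set B := ∫⁻ y, g y ^ q ∂μ
  have hbound (x : G) : (f ⋆ₗ[μ] g) x ^ r ≤
      ((fun y => f y ^ p) ⋆ₗ[μ] fun y => g y ^ q) x * (A ^ (1 - q⁻¹) * B ^ (1 - p⁻¹)) ^ r := by
    have hx := Measure.measurePreserving_sub_left μ x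
    have hgx : AEMeasurable (fun y => g (-y + x)) μ := by
      simpa only [neg_add_eq_sub] using! hg.comp_quasiMeasurePreserving hx.quasiMeasurePreserving
    have hB : ∫⁻ y, g (-y + x) ^ q ∂μ = B := by
      simpa only [neg_add_eq_sub] using lintegral_sub_left_eq_self (fun y => g y ^ q) x
    have h := lintegral_mul_le_lintegral_rpow_mul_rpow hf hgx hp hq hr hpqr
    rw [hB] at h
    calc _ ≤ _ := ENNReal.rpow_le_rpow h hr.le
      _ = _ := by
        rw [mul_assoc, ENNReal.mul_rpow_of_nonneg _ _ hr.le, ENNReal.rpow_inv_rpow hr.ne']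
        rfl
  calc _ ≤ _ := lintegral_mono hbound
    _ = A * B * (A ^ (1 - q⁻¹) * B ^ (1 - p⁻¹)) ^ r := by
        rw [lintegral_mul_const'' _ (by fun_prop),
          lintegral_lconvolution (by fun_prop) (by fun_prop)]
    _ = ((A * B) ^ r⁻¹ * (A ^ (1 - q⁻¹) * B ^ (1 - p⁻¹))) ^ r := by
        rw [ENNReal.mul_rpow_of_nonneg ((A * B) ^ r⁻¹) _ hr.le, ENNReal.rpow_inv_rpow hr.ne']
    _ = (A ^ p⁻¹ * B ^ q⁻¹) ^ r := by
        have hr' : 0 ≤ r⁻¹ := by positivity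
        rw [ENNReal.mul_rpow_of_nonneg _ _ hr', mul_mul_mul_comm,
          ← ENNReal.rpow_add_of_nonneg _ _ hr' hq1, ← ENNReal.rpow_add_of_nonneg _ _ hr' hp1]
        congr 3 <;> linarith

theorem eLpNorm_lconvolution_le [SFinite μ] {f g : G → ℝ≥0∞} (hf : AEMeasurable f μ)
    (hg : AEMeasurable g μ) {p q r : ℝ≥0∞} (hp : 1 ≤ p) (hq : 1 ≤ q)
    (hpqr : p⁻¹ + q⁻¹ = 1 + r⁻¹) :
    eLpNorm (f ⋆ₗ[μ] g) r μ ≤ eLpNorm f p μ * eLpNorm g q μ := by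
  rcases eq_or_ne r ∞ with rfl | hr
  · have : p.HolderConjugate q := ENNReal.holderConjugate_iff.2 (by simpa using hpqr)
    rw [eLpNorm_exponent_top]
    exact essSup_le_of_ae_le _ (.of_forall (lconvolution_le_eLpNorm_mul_eLpNorm hf hg))
  have hp0 : p ≠ 0 := (one_pos.trans_le hp).ne'
  have hq0 : q ≠ 0 := (one_pos.trans_le hq).ne'
  have hp1 : p⁻¹ ≤ 1 := ENNReal.inv_le_one.2 hp
  have hq1 : q⁻¹ ≤ 1 := ENNReal.inv_le_one.2 hq
  have hr' : 0 < r⁻¹ := ENNReal.inv_pos.2 hr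
  have hsum : 1 < p⁻¹ + q⁻¹ := hpqr ▸ ENNReal.lt_add_right ENNReal.one_ne_top hr'.ne'
  have hpt : p ≠ ∞ := by rintro rfl; simp [hq1.not_gt] at hsum
  have hqt : q ≠ ∞ := by rintro rfl; simp [hp1.not_gt] at hsum
  have hr0 : r ≠ 0 := by
    rintro rfl
    simp [hp0, hq0] at hpqr
  have hreal : p.toReal⁻¹ + q.toReal⁻¹ = 1 + r.toReal⁻¹ := by
    simpa [ENNReal.toReal_add, hp0, hq0, hr0, hpt, hqt] using congrArg ENNReal.toReal hpqr
  rw [eLpNorm_eq_lintegral_rpow_enorm_toReal hr0 hr, eLpNorm_eq_lintegral_rpow_enorm_toReal hp0 hpt,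
    eLpNorm_eq_lintegral_rpow_enorm_toReal hq0 hqt]
  simp only [enorm_eq_self, one_div]
  rw [ENNReal.rpow_inv_le_iff (ENNReal.toReal_pos hr0 hr)]
  exact lintegral_lconvolution_rpow_le hf hg (by simpa using ENNReal.toReal_mono hpt hp)
    (by simpa using ENNReal.toReal_mono hqt hq) (ENNReal.toReal_pos hr0 hr) hreal

end Convolution

section Interpolation

variable {α : Type*} [MeasurableSpace α] {μ : Measure α}

theorem lintegral_Ioi_zero_rpow (e : ℝ) : ∫⁻ x in Set.Ioi (0 : ℝ), ENNReal.ofReal (x ^ e) = ∞ := by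
  by_contra h
  refine not_integrableOn_Ioi_rpow e ⟨by fun_prop, ?_⟩
  rw [hasFiniteIntegral_iff_ofReal]
  · exact lt_top_iff_ne_top.2 h
  · filter_upwards [ae_restrict_mem measurableSet_Ioi] with x hx using Real.rpow_nonneg hx.le e

theorem lintegral_rpow_eq_lintegral_meas_ofReal_lt_mul {f : α → ℝ≥0∞} (hf : AEMeasurable f μ)
    {e : ℝ} (he : 0 < e) :
    ∫⁻ a, f a ^ e ∂μ = ENNReal.ofReal e *
      ∫⁻ l in Set.Ioi (0 : ℝ), μ {a | ENNReal.ofReal l < f a} * ENNReal.ofReal (l ^ (e - 1)) := by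
  by_cases hfin : ∀ᵐ a ∂μ, f a ≠ ∞
  · have hlt {l : ℝ} (hl : 0 < l) :
        μ {a | l < (f a).toReal} = μ {a | ENNReal.ofReal l < f a} := by
      refine measure_congr ?_
      filter_upwards [hfin] with a ha
      exact propext (ENNReal.ofReal_lt_iff_lt_toReal hl.le ha).symm
    have hcongr : ∫⁻ l in Set.Ioi (0 : ℝ),
          μ {a | ENNReal.ofReal l < f a} * ENNReal.ofReal (l ^ (e - 1)) =
        ∫⁻ l in Set.Ioi (0 : ℝ), μ {a | l < (f a).toReal} * ENNReal.ofReal (l ^ (e - 1)) :=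
      setLIntegral_congr_fun measurableSet_Ioi fun l hl => by simp only [hlt hl]
    rw [hcongr, ← lintegral_rpow_eq_lintegral_meas_lt_mul μ
      (Filter.Eventually.of_forall fun _ => ENNReal.toReal_nonneg) hf.ennreal_toReal he]
    refine lintegral_congr_ae ?_
    filter_upwards [hfin] with a ha
    rw [← ENNReal.ofReal_rpow_of_nonneg ENNReal.toReal_nonneg he.le, ENNReal.ofReal_toReal ha]
  · have hpos : μ {a | f a = ∞} ≠ 0 := by simpa [ae_iff] using hfin
    have hleft : ∫⁻ a, f a ^ e ∂μ = ∞ := by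
      refine lintegral_eq_top_of_measure_eq_top_ne_zero (hf.pow_const _) ?_
      simpa [he, he.not_gt] using hpos
    have hright : ∞ ≤ ∫⁻ l in Set.Ioi (0 : ℝ),
        μ {a | ENNReal.ofReal l < f a} * ENNReal.ofReal (l ^ (e - 1)) := calc
      ∞ = ∫⁻ l in Set.Ioi (0 : ℝ), μ {a | f a = ∞} * ENNReal.ofReal (l ^ (e - 1)) := by
        rw [lintegral_const_mul _ (by fun_prop), lintegral_Ioi_zero_rpow, ENNReal.mul_top hpos]
      _ ≤ _ := by gcongr with l a; rintro h; simp_all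
    rw [hleft, top_le_iff.1 hright, ENNReal.mul_top (by simpa using he)]

theorem lintegral_rpow_withDensity_self {f : α → ℝ≥0∞} (hf : Measurable f) {e : ℝ} (he : 0 ≤ e) :
    ∫⁻ a, f a ^ e ∂μ.withDensity f = ∫⁻ a, f a ^ (1 + e) ∂μ := by
  rw [lintegral_withDensity_eq_lintegral_mul _ hf (by fun_prop)]
  simp_rw [Pi.mul_apply, ENNReal.rpow_add_of_nonneg _ _ zero_le_one he, ENNReal.rpow_one]

theorem lintegral_rpow_le_of_meas_ofReal_lt_le {β : Type*} [MeasurableSpace β] {ν : Measure β}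
    [SFinite ν] {g : α → ℝ≥0∞} (hg : AEMeasurable g μ) {f : β → ℝ≥0∞} (hf : Measurable f) {p r : ℝ}
    (hp : 1 < p) (hr : 0 < r) {K : ℝ≥0∞}
    (h : ∀ l, 0 < l → μ {a | ENNReal.ofReal l < g a} ≤
      K * ENNReal.ofReal (l ^ (-(r / p))) *
        ∫⁻ b in {b | ENNReal.ofReal (l ^ (r / p)) < f b}, f b ∂ν) :
    ∫⁻ a, g a ^ r ∂μ ≤ K * ENNReal.ofReal (p / (p - 1)) * ∫⁻ b, f b ^ p ∂ν := by
  have hp0 : 0 < p := by linarith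
  set e : ℝ := r - r / p
  have he : 0 < e := sub_pos.2 (div_lt_self hr hp)
  set ρ : Measure β := ν.withDensity f
  have hlevel {l : ℝ} (hl : 0 < l) :
      ∫⁻ b in {b | ENNReal.ofReal (l ^ (r / p)) < f b}, f b ∂ν =
        ρ {b | ENNReal.ofReal l < f b ^ (p / r)} := by
    rw [withDensity_apply' f]
    congr! 4 with b
    rw [← ENNReal.ofReal_rpow_of_pos hl, ← ENNReal.rpow_lt_rpow_iff (z := p / r) (by positivity),
      ← ENNReal.rpow_mul, div_mul_div_cancel₀ hp0.ne', div_self hr.ne', ENNReal.rpow_one]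
  have hmass : ∫⁻ b, (f b ^ (p / r)) ^ e ∂ρ = ∫⁻ b, f b ^ p ∂ν := by
    simp_rw [← ENNReal.rpow_mul]
    rw [show p / r * e = p - 1 by simp only [e]; field_simp,
      lintegral_rpow_withDensity_self hf (by linarith), add_sub_cancel]
  have hconst : ENNReal.ofReal r = ENNReal.ofReal (p / (p - 1)) * ENNReal.ofReal e := by
    rw [← ENNReal.ofReal_mul (by have := sub_pos.2 hp; positivity)]
    congr 1
    have : p - 1 ≠ 0 := by linarith
    simp only [e]
    field_simp
  have hmeas : Measurable fun l : ℝ => ρ {b | ENNReal.ofReal l < f b ^ (p / r)} :=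
    Antitone.measurable fun l l' hll' => measure_mono fun b hb =>
      (ENNReal.ofReal_le_ofReal hll').trans_lt hb
  calc ∫⁻ a, g a ^ r ∂μ
      = ENNReal.ofReal r * ∫⁻ l in Set.Ioi (0 : ℝ),
          μ {a | ENNReal.ofReal l < g a} * ENNReal.ofReal (l ^ (r - 1)) :=
        lintegral_rpow_eq_lintegral_meas_ofReal_lt_mul hg hr
    _ ≤ ENNReal.ofReal r * ∫⁻ l in Set.Ioi (0 : ℝ),
          K * (ρ {b | ENNReal.ofReal l < f b ^ (p / r)} * ENNReal.ofReal (l ^ (e - 1))) := by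
        gcongr ENNReal.ofReal r * ?_
        refine setLIntegral_mono' measurableSet_Ioi fun l hl => ?_
        have hpow : ENNReal.ofReal (l ^ (e - 1)) =
            ENNReal.ofReal (l ^ (-(r / p))) * ENNReal.ofReal (l ^ (r - 1)) := by
          rw [← ENNReal.ofReal_mul (Real.rpow_nonneg hl.le _), ← Real.rpow_add hl]
          congr 2
          ring
        grw [h l hl, hlevel hl, hpow]
        exact le_of_eq (by ring)
    _ = K * ENNReal.ofReal (p / (p - 1)) * ∫⁻ b, f b ^ p ∂ν := by
        rw [lintegral_const_mul _ (by exact hmeas.mul (by fun_prop)), ← hmass,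
          lintegral_rpow_eq_lintegral_meas_ofReal_lt_mul (by fun_prop) he, hconst]
        ring

end Interpolation

section WeakYoung

theorem lintegral_Ioo_rpow {b e : ℝ} (hb : 0 ≤ b) (he : 0 < e) :
    ∫⁻ x in Set.Ioo 0 b, ENNReal.ofReal (x ^ (e - 1)) = ENNReal.ofReal (b ^ e / e) := by
  have hi : IntegrableOn (fun x : ℝ => x ^ (e - 1)) (Set.Ioc 0 b) :=
    (intervalIntegrable_iff_integrableOn_Ioc_of_le hb).1
      (intervalIntegral.intervalIntegrable_rpow' (by linarith))
  rw [setLIntegral_congr Ioo_ae_eq_Ioc, ← ofReal_integral_eq_lintegral_ofReal hi]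
  · rw [← intervalIntegral.integral_of_le hb, integral_rpow (Or.inl (by linarith))]
    simp [Real.zero_rpow he.ne']
  · filter_upwards [ae_restrict_mem measurableSet_Ioc] with x hx
    exact Real.rpow_nonneg hx.1.le _

theorem lintegral_Ioi_rpow {R e : ℝ} (hR : 0 < R) (he : e < -1) :
    ∫⁻ x in Set.Ioi R, ENNReal.ofReal (x ^ e) = ENNReal.ofReal (-R ^ (e + 1) / (e + 1)) := by
  rw [← integral_Ioi_rpow_of_lt he hR, ← ofReal_integral_eq_lintegral_ofReal
    (integrableOn_Ioi_rpow_of_lt he hR)]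
  filter_upwards [ae_restrict_mem measurableSet_Ioi] with x hx
  exact Real.rpow_nonneg (hR.trans hx).le _

section WeakType

variable {α : Type*} [MeasurableSpace α] {μ : Measure α} {k : α → ℝ≥0∞} {q : ℝ} {A : ℝ≥0∞}

theorem lintegral_tsub_le_of_meas_ofReal_lt_le (hk : AEMeasurable k μ) (hq : 1 < q)
    (hA : ∀ l, 0 < l → μ {a | ENNReal.ofReal l < k a} ≤ A * ENNReal.ofReal (l ^ (-q)))
    {R : ℝ} (hR : 0 < R) :
    ∫⁻ a, (k a - ENNReal.ofReal R) ∂μ ≤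
      A * ENNReal.ofReal (1 / (q - 1)) * ENNReal.ofReal (R ^ (1 - q)) := by
  have hmeas {l : ℝ} (hl : 0 < l) : μ {a | ENNReal.ofReal l < k a - ENNReal.ofReal R} =
      μ {a | ENNReal.ofReal (l + R) < k a} := by
    simp_rw [lt_tsub_iff_right, ENNReal.ofReal_add hl.le hR.le]
  calc ∫⁻ a, (k a - ENNReal.ofReal R) ∂μ
      = ∫⁻ l in Set.Ioi (0 : ℝ), μ {a | ENNReal.ofReal l < k a - ENNReal.ofReal R} := by
        simpa using lintegral_rpow_eq_lintegral_meas_ofReal_lt_mul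
          (hk.sub (aemeasurable_const (b := ENNReal.ofReal R))) one_pos
    _ ≤ ∫⁻ l in Set.Ioi (0 : ℝ), A * ENNReal.ofReal ((l + R) ^ (-q)) :=
        setLIntegral_mono' measurableSet_Ioi fun l hl =>
          (hmeas hl).trans_le (hA _ (add_pos hl hR))
    _ = A * ∫⁻ l in Set.Ioi R, ENNReal.ofReal (l ^ (-q)) := by
        rw [lintegral_const_mul _ (by fun_prop)]
        congr 1
        simpa using (measurePreserving_add_right volume R).setLIntegral_comp_preimage
          (s := Set.Ioi R) (f := fun l => ENNReal.ofReal (l ^ (-q))) measurableSet_Ioi (by fun_prop)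
    _ = A * ENNReal.ofReal (1 / (q - 1)) * ENNReal.ofReal (R ^ (1 - q)) := by
        rw [lintegral_Ioi_rpow hR (by linarith), mul_assoc,
          ← ENNReal.ofReal_mul (one_div_nonneg.2 (sub_pos.2 hq).le)]
        congr 2
        rw [neg_add_eq_sub, ← neg_sub q 1, neg_div_neg_eq, one_div_mul_eq_div]

theorem lintegral_min_rpow_le_of_meas_ofReal_lt_le (hk : AEMeasurable k μ) {s : ℝ} (hs : 0 < s)
    (hqs : q < s)
    (hA : ∀ l, 0 < l → μ {a | ENNReal.ofReal l < k a} ≤ A * ENNReal.ofReal (l ^ (-q)))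
    {R : ℝ} (hR : 0 < R) :
    ∫⁻ a, min (k a) (ENNReal.ofReal R) ^ s ∂μ ≤
      A * ENNReal.ofReal (s / (s - q)) * ENNReal.ofReal (R ^ (s - q)) := by
  have hmeas {l : ℝ} (hl : 0 < l) : μ {a | ENNReal.ofReal l < min (k a) (ENNReal.ofReal R)} *
        ENNReal.ofReal (l ^ (s - 1)) ≤
      (Set.Iio R).indicator (fun l => A * ENNReal.ofReal (l ^ (s - q - 1))) l := by
    rcases lt_or_ge l R with hlR | hlR
    · rw [Set.indicator_of_mem (Set.mem_Iio.2 hlR)]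
      have hpow : l ^ (s - q - 1) = l ^ (-q) * l ^ (s - 1) := by
        rw [← Real.rpow_add hl]
        congr 1
        ring
      rw [hpow, ENNReal.ofReal_mul (by positivity), ← mul_assoc]
      grw [← hA l hl]
      gcongr with a
      exact min_le_left _ _
    · simp [hlR.not_gt, ENNReal.ofReal_lt_ofReal_iff_of_nonneg hl.le]
  calc ∫⁻ a, min (k a) (ENNReal.ofReal R) ^ s ∂μ
      = ENNReal.ofReal s * ∫⁻ l in Set.Ioi (0 : ℝ),
          μ {a | ENNReal.ofReal l < min (k a) (ENNReal.ofReal R)} * ENNReal.ofReal (l ^ (s - 1)) :=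
        lintegral_rpow_eq_lintegral_meas_ofReal_lt_mul (hk.min aemeasurable_const) hs
    _ ≤ ENNReal.ofReal s * ∫⁻ l in Set.Ioi (0 : ℝ),
          (Set.Iio R).indicator (fun l => A * ENNReal.ofReal (l ^ (s - q - 1))) l := by
        gcongr ENNReal.ofReal s * ?_
        exact setLIntegral_mono' measurableSet_Ioi fun l hl => hmeas hl
    _ = ENNReal.ofReal s * (A * ENNReal.ofReal (R ^ (s - q) / (s - q))) := by
        rw [lintegral_indicator measurableSet_Iio, Measure.restrict_restrict measurableSet_Iio,
          Set.inter_comm, Set.Ioi_inter_Iio, lintegral_const_mul _ (by fun_prop),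
          lintegral_Ioo_rpow hR.le (sub_pos.2 hqs)]
    _ = A * ENNReal.ofReal (s / (s - q)) * ENNReal.ofReal (R ^ (s - q)) := by
        rw [mul_left_comm, mul_assoc, ← ENNReal.ofReal_mul hs.le,
          ← ENNReal.ofReal_mul (div_nonneg hs.le (sub_pos.2 hqs).le)]
        congr 2
        ring

theorem eLpNorm_ofReal_eq_lintegral_rpow (f : α → ℝ≥0∞) {p : ℝ} (hp : 0 < p) :
    eLpNorm f (ENNReal.ofReal p) μ = (∫⁻ a, f a ^ p ∂μ) ^ p⁻¹ := by
  rw [eLpNorm_eq_lintegral_rpow_enorm_toReal (by simpa) ENNReal.ofReal_ne_top,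
    ENNReal.toReal_ofReal hp.le, one_div]
  simp only [enorm_eq_self]

theorem eLpNorm_min_le_of_meas_ofReal_lt_le (hk : AEMeasurable k μ) {s : ℝ} (hs : 0 < s)
    (hqs : q < s)
    (hA : ∀ l, 0 < l → μ {a | ENNReal.ofReal l < k a} ≤ A * ENNReal.ofReal (l ^ (-q)))
    {R : ℝ} (hR : 0 < R) :
    eLpNorm (fun a => min (k a) (ENNReal.ofReal R)) (ENNReal.ofReal s) μ ≤
      (A * ENNReal.ofReal (s / (s - q))) ^ s⁻¹ * ENNReal.ofReal (R ^ (1 - q / s)) := by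
  rw [eLpNorm_ofReal_eq_lintegral_rpow _ hs]
  grw [lintegral_min_rpow_le_of_meas_ofReal_lt_le hk hs hqs hA hR]
  rw [ENNReal.mul_rpow_of_nonneg _ _ (by positivity),
    ENNReal.ofReal_rpow_of_nonneg (by positivity) (by positivity), ← Real.rpow_mul hR.le]
  field_simp
  exact le_rfl

theorem exists_add_eq_of_meas_ofReal_lt_le (hk : AEMeasurable k μ) {p r s : ℝ}
    (hps : p.HolderConjugate s) (hq : 1 < q) (hqs : q < s) (hr : r ≠ 0) (hpqr : p⁻¹ + q⁻¹ = 1 + r⁻¹)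
    (hA : ∀ l, 0 < l → μ {x | ENNReal.ofReal l < k x} ≤ A * ENNReal.ofReal (l ^ (-q)))
    {l : ℝ} (hl : 0 < l) :
    ∃ k₀ k₁ : α → ℝ≥0∞, AEMeasurable k₀ μ ∧ AEMeasurable k₁ μ ∧ k₀ + k₁ = k ∧
      ∫⁻ x, k₀ x ∂μ ≤ A * ENNReal.ofReal (1 / (q - 1)) * ENNReal.ofReal (l ^ (1 - r / p)) ∧
      eLpNorm k₁ (ENNReal.ofReal s) μ ≤
        (A * ENNReal.ofReal (s / (s - q))) ^ s⁻¹ * ENNReal.ofReal l := by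
  have hs := hps.inv_add_inv_eq_one
  have hp0 := hps.pos
  have hs0 : 0 < s := hps.symm.pos
  have hpqr' : r / p + r / q = r + 1 := by
    linear_combination r * hpqr + mul_inv_cancel₀ hr
  have hR : 0 < l ^ (r / q) := by positivity
  -- The height `l ^ (r / q)` is chosen so that Hölder for `k₁` yields a multiple of `l`.
  refine ⟨fun x => k x - ENNReal.ofReal (l ^ (r / q)),
    fun x => min (k x) (ENNReal.ofReal (l ^ (r / q))), by fun_prop, by fun_prop,
    funext fun x => tsub_add_min, ?_, ?_⟩
  · convert! lintegral_tsub_le_of_meas_ofReal_lt_le hk hq hA hR using 3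
    rw [← Real.rpow_mul hl.le]
    congr 1
    field_simp at hpqr' ⊢
    linarith
  · grw [eLpNorm_min_le_of_meas_ofReal_lt_le hk hs0 hqs hA hR]
    rw [← Real.rpow_mul hl.le]
    have hexp : r / q * (1 - q / s) = 1 := by
      linear_combination (norm := (field_simp; ring)) hpqr' - r * hs
    rw [hexp, Real.rpow_one]

end WeakType

variable {G : Type*} [AddCommGroup G] [MeasurableSpace G] [MeasurableAdd₂ G] [MeasurableNeg G]
  {μ : Measure G} [SFinite μ] [μ.IsAddLeftInvariant] [μ.IsNegInvariant]

theorem meas_add_lt_lconvolution_add_le {f k₀ k₁ : G → ℝ≥0∞} (hf : Measurable f)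
    (hk₀ : AEMeasurable k₀ μ) (hk₁ : AEMeasurable k₁ μ) {p q : ℝ≥0∞} [p.HolderConjugate q]
    {a b l : ℝ≥0∞} (hb : eLpNorm f p μ * eLpNorm k₁ q μ + a * ∫⁻ x, k₀ x ∂μ ≤ b) (hl₀ : l ≠ 0)
    (hl : l ≠ ∞) :
    μ {x | b + l < (f ⋆ₗ[μ] (k₀ + k₁)) x} ≤
      (∫⁻ y in {y | a < f y}, f y ∂μ) * (∫⁻ x, k₀ x ∂μ) / l := by
  have hS : MeasurableSet {y | a < f y} := measurableSet_lt measurable_const hf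
  set F : G → ℝ≥0∞ := {y | a < f y}.indicator f
  have hF : Measurable F := hf.indicator hS
  have hfF (y : G) : f y ≤ a + F y := by
    by_cases hy : a < f y
    · simp [F, hy]
    · exact (not_lt.1 hy).trans le_self_add
  have hle (x : G) : (f ⋆ₗ[μ] (k₀ + k₁)) x ≤ b + (F ⋆ₗ[μ] k₀) x := by
    have hx := Measure.measurePreserving_sub_left μ x
    have hk₀x : AEMeasurable (fun y => k₀ (-y + x)) μ := by
      simpa only [neg_add_eq_sub] using!
        hk₀.comp_quasiMeasurePreserving hx.quasiMeasurePreserving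
    have hmain : (f ⋆ₗ[μ] k₀) x ≤ a * ∫⁻ y, k₀ y ∂μ + (F ⋆ₗ[μ] k₀) x := calc
      (f ⋆ₗ[μ] k₀) x ≤ ∫⁻ y, (a * k₀ (-y + x) + F y * k₀ (-y + x)) ∂μ :=
        lintegral_mono fun y => by dsimp only; grw [hfF y]; rw [add_mul]
      _ = _ := by
        rw [lintegral_add_left' (by fun_prop), lintegral_const_mul'' _ hk₀x]
        simp only [neg_add_eq_sub]
        rw [lintegral_sub_left_eq_self k₀ x, lconvolution_def]
        simp only [neg_add_eq_sub]
    have hsplit : (f ⋆ₗ[μ] (k₀ + k₁)) x = (f ⋆ₗ[μ] k₀) x + (f ⋆ₗ[μ] k₁) x := by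
      simp only [lconvolution_def, Pi.add_apply, mul_add]
      exact lintegral_add_left' (by fun_prop) _
    grw [hsplit, hmain, lconvolution_le_eLpNorm_mul_eLpNorm (p := p) (q := q) hf.aemeasurable hk₁ x,
      ← hb]
    exact le_of_eq (by ring)
  calc μ {x | b + l < (f ⋆ₗ[μ] (k₀ + k₁)) x} ≤ μ {x | l ≤ (F ⋆ₗ[μ] k₀) x} :=
        measure_mono fun x hx => (lt_of_add_lt_add_left (hx.trans_le (hle x))).le
    _ ≤ (∫⁻ x, (F ⋆ₗ[μ] k₀) x ∂μ) / l := meas_ge_le_lintegral_div (by fun_prop) hl₀ hl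
    _ = (∫⁻ y in {y | a < f y}, f y ∂μ) * (∫⁻ x, k₀ x ∂μ) / l := by
        rw [lintegral_lconvolution hF.aemeasurable hk₀, lintegral_indicator hS]

variable {k : G → ℝ≥0∞} {p q r : ℝ} {A : ℝ≥0∞}

theorem exists_meas_lt_lconvolution_le (hk : AEMeasurable k μ) (hp : 1 < p) (hq : 1 < q)
    (hr : 0 < r) (hpqr : p⁻¹ + q⁻¹ = 1 + r⁻¹) (hA_top : A ≠ ∞)
    (hA : ∀ l, 0 < l → μ {x | ENNReal.ofReal l < k x} ≤ A * ENNReal.ofReal (l ^ (-q))) :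
    ∃ c, c ≠ 0 ∧ c ≠ ∞ ∧ ∀ f : G → ℝ≥0∞, Measurable f → ∫⁻ x, f x ^ p ∂μ ≤ 1 → ∀ l : ℝ, 0 < l →
      μ {x | c * ENNReal.ofReal l < (f ⋆ₗ[μ] k) x} ≤
        A * ENNReal.ofReal (1 / (q - 1)) * ENNReal.ofReal (l ^ (-(r / p))) *
          ∫⁻ x in {x | ENNReal.ofReal (l ^ (r / p)) < f x}, f x ∂μ := by
  have hps : p.HolderConjugate p.conjExponent := .conjExponent hp
  set s := p.conjExponent
  have hqs : q < s := by
    rw [← inv_lt_inv₀ hps.symm.pos (by linarith)]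
    linarith [inv_pos.2 hr, hps.inv_add_inv_eq_one]
  have hs0 : 0 < s := hps.symm.pos
  have : (ENNReal.ofReal p).HolderConjugate (ENNReal.ofReal s) := hps.ennrealOfReal
  set c₀ := A * ENNReal.ofReal (1 / (q - 1))
  set c₁ := (A * ENNReal.ofReal (s / (s - q))) ^ s⁻¹
  have hc₀ : c₀ ≠ ∞ := by finiteness
  have hc₁ : c₁ ≠ ∞ := by finiteness
  refine ⟨c₁ + c₀ + 1, by simp, by finiteness, fun f hf hf1 l hl => ?_⟩
  obtain ⟨k₀, k₁, hk₀m, hk₁m, hk₀₁, hk₀, hk₁⟩ :=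
    exists_add_eq_of_meas_ofReal_lt_le hk hps hq hqs hr.ne' hpqr hA hl
  have hfp : eLpNorm f (ENNReal.ofReal p) μ ≤ 1 := by
    rw [eLpNorm_ofReal_eq_lintegral_rpow f hps.pos]
    exact ENNReal.rpow_le_one hf1 hps.inv_nonneg
  have hb : eLpNorm f (ENNReal.ofReal p) μ * eLpNorm k₁ (ENNReal.ofReal s) μ +
      ENNReal.ofReal (l ^ (r / p)) * ∫⁻ x, k₀ x ∂μ ≤ (c₁ + c₀) * ENNReal.ofReal l := by
    grw [hfp, hk₁, hk₀]
    rw [one_mul, mul_left_comm, ← ENNReal.ofReal_mul (by positivity), ← Real.rpow_add hl,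
      add_sub_cancel, Real.rpow_one, add_mul]
  calc _ = μ {x | (c₁ + c₀) * ENNReal.ofReal l + ENNReal.ofReal l < (f ⋆ₗ[μ] (k₀ + k₁)) x} := by
        rw [hk₀₁, add_mul _ 1, one_mul]
    _ ≤ _ := meas_add_lt_lconvolution_add_le hf hk₀m hk₁m hb (by simpa) (by simp)
    _ ≤ _ := by
        grw [hk₀]
        rw [mul_comm, ENNReal.mul_div_right_comm, mul_div_assoc, ← ENNReal.ofReal_div_of_pos hl,
          ← Real.rpow_sub_one hl.ne', sub_sub_cancel_left]

theorem exists_lintegral_lconvolution_rpow_le_of_weak (hk : AEMeasurable k μ) (hp : 1 < p)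
    (hq : 1 < q) (hr : 0 < r) (hpqr : p⁻¹ + q⁻¹ = 1 + r⁻¹) (hA_top : A ≠ ∞)
    (hA : ∀ l, 0 < l → μ {x | ENNReal.ofReal l < k x} ≤ A * ENNReal.ofReal (l ^ (-q))) :
    ∃ C, C ≠ ∞ ∧ ∀ f : G → ℝ≥0∞, Measurable f → ∫⁻ x, f x ^ p ∂μ ≤ 1 →
      ∫⁻ x, (f ⋆ₗ[μ] k) x ^ r ∂μ ≤ C := by
  obtain ⟨c, hc₀, hc, hweak⟩ := exists_meas_lt_lconvolution_le hk hp hq hr hpqr hA_top hA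
  set K := A * ENNReal.ofReal (1 / (q - 1))
  have hK : K ≠ ∞ := by finiteness
  refine ⟨c ^ r * (K * ENNReal.ofReal (p / (p - 1))), by finiteness, fun f hf hf1 => ?_⟩
  have hdiv (x : G) : (f ⋆ₗ[μ] k) x ^ r = c ^ r * ((f ⋆ₗ[μ] k) x / c) ^ r := by
    rw [← ENNReal.mul_rpow_of_nonneg _ _ hr.le, ENNReal.mul_div_cancel hc₀ hc]
  have hstrong := lintegral_rpow_le_of_meas_ofReal_lt_le (μ := μ) (ν := μ) (p := p) (K := K)
    (g := fun x => (f ⋆ₗ[μ] k) x / c) (by fun_prop) hf hp hr fun l hl => by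
      simpa only [ENNReal.lt_div_iff_mul_lt (.inl hc₀) (.inl hc), mul_comm _ c] using
        hweak f hf hf1 l hl
  simp_rw [hdiv]
  rw [lintegral_const_mul'' _ (by fun_prop)]
  grw [hstrong, hf1]
  rw [mul_one]

theorem exists_lconvolution_le_of_weak (hk : AEMeasurable k μ) (hp : 1 < p) (hq : 1 < q)
    (hr : 0 < r) (hpqr : p⁻¹ + q⁻¹ = 1 + r⁻¹) (hA_top : A ≠ ∞)
    (hA : ∀ l, 0 < l → μ {x | ENNReal.ofReal l < k x} ≤ A * ENNReal.ofReal (l ^ (-q))) :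
    ∃ C, C ≠ ∞ ∧ ∀ f : G → ℝ≥0∞, Measurable f →
      (∫⁻ x, (f ⋆ₗ[μ] k) x ^ r ∂μ) ^ r⁻¹ ≤ C * (∫⁻ x, f x ^ p ∂μ) ^ p⁻¹ := by
  obtain ⟨C, hC, hbound⟩ := exists_lintegral_lconvolution_rpow_le_of_weak hk hp hq hr hpqr hA_top hA
  have hp0 : 0 < p := by linarith
  -- The added `1` keeps the right-hand side infinite when `f` is not in `L^p`.
  refine ⟨C ^ r⁻¹ + 1, by finiteness, fun f hf => ?_⟩
  set M := (∫⁻ x, f x ^ p ∂μ) ^ p⁻¹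
  have hMp : ∫⁻ x, f x ^ p ∂μ = M ^ p := (ENNReal.rpow_inv_rpow hp0.ne' _).symm
  rcases eq_or_ne M ∞ with htop | htop
  · simp [htop, ENNReal.mul_top]
  rcases eq_or_ne M 0 with h0 | h0
  · have hf0 : f =ᵐ[μ] 0 := by
      rw [h0, ENNReal.zero_rpow_of_pos hp0, lintegral_eq_zero_iff (by fun_prop)] at hMp
      filter_upwards [hMp] with x hx
      simpa [hp0, hp0.not_gt] using hx
    have hconv (x : G) : (f ⋆ₗ[μ] k) x = 0 := by
      rw [lconvolution_def, lintegral_eq_zero_of_ae_eq_zero]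
      filter_upwards [hf0] with y hy
      simp [hy]
    simp [hconv, hr]
  have hnorm : ∫⁻ x, (f x / M) ^ p ∂μ ≤ 1 := by
    simp_rw [ENNReal.div_rpow_of_nonneg _ _ hp0.le, div_eq_mul_inv]
    rw [lintegral_mul_const _ (by fun_prop), hMp]
    exact ENNReal.mul_inv_le_one _
  have hscale (x : G) : (f ⋆ₗ[μ] k) x = M * ((fun x => f x / M) ⋆ₗ[μ] k) x := by
    simp_rw [lconvolution_def]
    rw [← lintegral_const_mul' _ _ htop]
    simp_rw [← mul_assoc, ENNReal.mul_div_cancel h0 htop]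
  simp_rw [hscale, ENNReal.mul_rpow_of_nonneg _ _ hr.le]
  rw [lintegral_const_mul' _ _ (by finiteness), ENNReal.mul_rpow_of_nonneg _ _ (by positivity),
    ENNReal.rpow_rpow_inv hr.ne', mul_comm]
  gcongr
  grw [hbound _ (by fun_prop) hnorm]
  exact le_self_add

end WeakYoung

section LowerIntegral

variable {α : Type*} [MeasurableSpace α] {μ : Measure α}

theorem exists_measurable_le_forall_lintegral_mul_eq [SigmaFinite μ] (φ : α → ℝ≥0∞) :
    ∃ m, Measurable m ∧ m ≤ φ ∧ ∀ c : α → ℝ≥0∞, Measurable c → (∀ a, c a ≠ ∞) →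
      ∫⁻ a, φ a * c a ∂μ = ∫⁻ a, m a * c a ∂μ := by
  obtain ⟨m, hm, hmφ, hmax⟩ := exists_measurable_le_forall_setLIntegral_eq μ φ
  refine ⟨m, hm, hmφ, fun c hc hc_top => le_antisymm ?_ (lintegral_mono fun a => ?_)⟩
  · obtain ⟨h, hh, hhφ, heq⟩ := exists_measurable_le_lintegral_eq μ fun a => φ a * c a
    have hdiv : (fun a => h a / c a) ≤ᵐ[μ] m :=
      ae_le_of_forall_setLIntegral_le_of_sigmaFinite (hh.div hc) fun s _ _ =>
        (lintegral_mono fun a => ENNReal.div_le_of_le_mul (hhφ a)).trans_eq (hmax s)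
    rw [heq]
    refine lintegral_mono_ae ?_
    filter_upwards [hdiv] with a ha
    rcases eq_or_ne (c a) 0 with h0 | h0
    · simpa [h0] using hhφ a
    · exact (ENNReal.div_le_iff h0 (hc_top a)).1 ha
  · dsimp only
    grw [hmφ a]

end LowerIntegral

section FractionalIntegration

/-- The kernel `u₊ ^ (-β)` on the line. Convolution with it is, up to the Gamma factor, the
Riemann-Liouville fractional integral of order `1 - β`. -/
def riemannLiouvilleKernel (β : ℝ) : ℝ → ℝ≥0∞ :=
  (Set.Ioi 0).indicator fun u => ENNReal.ofReal (u ^ (-β))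

theorem measurable_riemannLiouvilleKernel (β : ℝ) : Measurable (riemannLiouvilleKernel β) :=
  Measurable.indicator (by fun_prop) measurableSet_Ioi

theorem volume_ofReal_lt_riemannLiouvilleKernel_le {β l : ℝ} (hβ : 0 < β) (hl : 0 < l) :
    volume {u | ENNReal.ofReal l < riemannLiouvilleKernel β u} ≤ ENNReal.ofReal (l ^ (-β⁻¹)) := by
  have hsub : {u | ENNReal.ofReal l < riemannLiouvilleKernel β u} ⊆ Set.Ioo 0 (l ^ (-β⁻¹)) := by
    intro u hu
    by_cases h0 : 0 < u
    · have hlu : l < u ^ (-β) := by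
        simpa [riemannLiouvilleKernel, h0, ENNReal.ofReal_lt_ofReal_iff_of_nonneg hl.le] using hu
      rw [← inv_neg]
      exact ⟨h0, (Real.lt_rpow_inv_iff_of_neg h0 hl (neg_lt_zero.2 hβ)).2 hlu⟩
    · simp [riemannLiouvilleKernel, h0] at hu
  grw [hsub, Real.volume_Ioo, sub_zero]

theorem riemannLiouvilleKernel_ne_top (β u : ℝ) : riemannLiouvilleKernel β u ≠ ∞ := by
  unfold riemannLiouvilleKernel Set.indicator
  split_ifs <;> finiteness

theorem exists_lconvolution_riemannLiouvilleKernel_le {β p r : ℝ} (hβ₀ : 0 < β) (hβ₁ : β < 1)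
    (hp : 1 < p) (hr : 0 < r) (hpr : p⁻¹ + β = 1 + r⁻¹) :
    ∃ C, C ≠ ∞ ∧ ∀ f : ℝ → ℝ≥0∞,
      (∫⁻ t, (f ⋆ₗ riemannLiouvilleKernel β) t ^ r) ^ r⁻¹ ≤ C * (∫⁻ s, f s ^ p) ^ p⁻¹ := by
  have hk := measurable_riemannLiouvilleKernel β
  obtain ⟨C, hC, hbound⟩ := exists_lconvolution_le_of_weak hk.aemeasurable hp
    ((one_lt_inv₀ hβ₀).2 hβ₁) hr (by rwa [inv_inv]) ENNReal.one_ne_top fun l hl => by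
      simpa using volume_ofReal_lt_riemannLiouvilleKernel_le hβ₀ hl
  refine ⟨C, hC, fun f => ?_⟩
  obtain ⟨m, hm, hmf, hconv⟩ := exists_measurable_le_forall_lintegral_mul_eq (μ := volume) f
  have hfm : f ⋆ₗ riemannLiouvilleKernel β = m ⋆ₗ riemannLiouvilleKernel β := by
    ext t
    exact hconv _ (by fun_prop) fun s => riemannLiouvilleKernel_ne_top β _
  grw [hfm, hbound m hm]
  gcongr
  exact hmf _

end FractionalIntegration

section Minkowski

variable {α X : Type*} [MeasurableSpace α] [MeasurableSpace X] {μ : Measure α} {ν : Measure X}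

theorem exists_measurable_le_lt_lintegral [SigmaFinite ν] {f : X → ℝ≥0∞} {L : ℝ≥0∞}
    (hL : L < ∫⁻ x, f x ∂ν) :
    ∃ g, Measurable g ∧ g ≤ f ∧ ∫⁻ x, g x ∂ν ≠ ∞ ∧ L < ∫⁻ x, g x ∂ν := by
  rw [lintegral_eq_nnreal] at hL
  obtain ⟨g₀, hg₀, hL⟩ := by simpa only [lt_iSup_iff] using hL
  rw [← SimpleFunc.lintegral_eq_lintegral] at hL
  obtain ⟨g, hg, hg_fin, hLg⟩ := SimpleFunc.exists_lt_lintegral_simpleFunc_of_lt_lintegral hL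
  exact ⟨fun x => g x, by fun_prop, fun x => (ENNReal.coe_le_coe.2 (hg x)).trans (hg₀ x),
    hg_fin.ne, hLg⟩

theorem lintegral_Lp_lintegral_le [SFinite μ] [SigmaFinite ν] {H : α → X → ℝ≥0∞}
    (hH : Measurable H.uncurry) {q : ℝ} (hq : 1 ≤ q) :
    (∫⁻ x, (∫⁻ s, H s x ∂μ) ^ q ∂ν) ^ q⁻¹ ≤ ∫⁻ s, (∫⁻ x, H s x ^ q ∂ν) ^ q⁻¹ ∂μ := by
  have hq0 : 0 < q := by linarith
  have hq1 : 0 ≤ 1 - q⁻¹ := sub_nonneg.2 (inv_le_one_of_one_le₀ hq)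
  rw [ENNReal.rpow_inv_le_iff hq0]
  refine le_of_forall_lt fun L hL => ?_
  obtain ⟨g, hg, hgle, hg_fin, hLg⟩ := exists_measurable_le_lt_lintegral hL
  refine hLg.trans_le ?_
  set Γ := ∫⁻ x, g x ∂ν
  rcases eq_or_ne Γ 0 with h0 | h0
  · simp [h0]
  have hsplit : ∀ a : ℝ≥0∞, a = a ^ q⁻¹ * a ^ (1 - q⁻¹) := fun a => by
    rw [← ENNReal.rpow_add_of_nonneg _ _ (by positivity) hq1, add_sub_cancel, ENNReal.rpow_one]
  have key : Γ ^ q⁻¹ * Γ ^ (1 - q⁻¹) ≤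
      (∫⁻ s, (∫⁻ x, H s x ^ q ∂ν) ^ q⁻¹ ∂μ) * Γ ^ (1 - q⁻¹) :=
    calc Γ ^ q⁻¹ * Γ ^ (1 - q⁻¹) = ∫⁻ x, g x ^ q⁻¹ * g x ^ (1 - q⁻¹) ∂ν := by
          simp_rw [← hsplit, Γ]
      _ ≤ ∫⁻ x, (∫⁻ s, H s x ∂μ) * g x ^ (1 - q⁻¹) ∂ν := by
          gcongr with x
          exact (ENNReal.rpow_inv_le_iff hq0).2 (hgle x)
      _ = ∫⁻ x, ∫⁻ s, H s x * g x ^ (1 - q⁻¹) ∂μ ∂ν := by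
          congr! 2 with x
          rw [lintegral_mul_const _ (by fun_prop)]
      _ = ∫⁻ s, ∫⁻ x, H s x * g x ^ (1 - q⁻¹) ∂ν ∂μ := lintegral_lintegral_swap (by fun_prop)
      _ ≤ ∫⁻ s, (∫⁻ x, H s x ^ q ∂ν) ^ q⁻¹ * Γ ^ (1 - q⁻¹) ∂μ := by
          gcongr with s
          convert! ENNReal.lintegral_mul_norm_pow_le (μ := ν) (f := fun x => H s x ^ q) (g := g)
            (by fun_prop) hg.aemeasurable (inv_nonneg.2 hq0.le) hq1 (by ring) using 4 with x
          rw [ENNReal.rpow_rpow_inv hq0.ne']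
      _ = (∫⁻ s, (∫⁻ x, H s x ^ q ∂ν) ^ q⁻¹ ∂μ) * Γ ^ (1 - q⁻¹) :=
          lintegral_mul_const' _ _ (ENNReal.rpow_ne_top_of_nonneg hq1 hg_fin)
  refine (ENNReal.rpow_inv_le_iff hq0).1 ((ENNReal.mul_le_mul_iff_left ?_ ?_).1 key)
  · exact (ENNReal.rpow_pos (pos_iff_ne_zero.2 h0) hg_fin).ne'
  · exact ENNReal.rpow_ne_top_of_nonneg hq1 hg_fin

-- A finite lower integral forces every measurable subset of `{φ = ∞}` to be null.
theorem ae_eq_of_forall_ne_top {φ f g : α → ℝ≥0∞} (hφ : ∫⁻ s, φ s ∂μ ≠ ∞) (hf : AEMeasurable f μ)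
    (hg : AEMeasurable g μ) (hfg : ∀ᵐ s ∂μ, φ s ≠ ∞ → f s = g s) : f =ᵐ[μ] g := by
  let B := {s | hf.mk f s ≠ hg.mk g s}
  have hB : MeasurableSet B := (measurableSet_eq_fun hf.measurable_mk hg.measurable_mk).compl
  have hle : ∫⁻ s, B.indicator (fun _ => ∞) s ∂μ ≤ ∫⁻ s, φ s ∂μ := by
    refine lintegral_mono_ae ?_
    filter_upwards [hf.ae_eq_mk, hg.ae_eq_mk, hfg] with s hfs hgs hs
    refine Set.indicator_apply_le' (fun hsB => ?_) fun _ => zero_le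
    exact (not_not.1 (mt hs (hfs ▸ hgs ▸ hsB))).ge
  have hB0 : μ B = 0 := by
    by_contra h0
    rw [lintegral_indicator_const hB, ENNReal.top_mul h0] at hle
    exact hφ (top_le_iff.1 hle)
  exact hf.ae_eq_mk.trans (Filter.EventuallyEq.trans hB0 hg.ae_eq_mk.symm)

theorem exists_measurable_uncurry_eq_of_continuous [MetricSpace X] [SecondCountableTopology X]
    [OpensMeasurableSpace X] {S : Set X} {D : Set α} {P : α → X → ℝ≥0∞}
    (hP : ∀ x ∈ S, AEMeasurable (fun s => P s x) μ) (hPc : ∀ᵐ s ∂μ, s ∈ D → Continuous (P s)) :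
    ∃ H : α → X → ℝ≥0∞, Measurable H.uncurry ∧ ∀ᵐ s ∂μ, s ∈ D → ∀ x ∈ S, H s x = P s x := by
  rcases S.eq_empty_or_nonempty with rfl | ⟨x₀, hx₀⟩
  · exact ⟨0, measurable_const, by simp⟩
  have hQ : ∀ x, ∃ Q : α → ℝ≥0∞, Measurable Q ∧ (x ∈ S → (fun s => P s x) =ᵐ[μ] Q) := fun x => by
    by_cases hx : x ∈ S
    · exact ⟨(hP x hx).mk, (hP x hx).measurable_mk, fun _ => (hP x hx).ae_eq_mk⟩
    · exact ⟨0, measurable_zero, fun h => absurd h hx⟩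
  choose Q hQ hPQ using hQ
  -- Simple approximations of `x` take countably many values, so one null set serves them all.
  let A := SimpleFunc.approxOn (Prod.snd : α × X → X) measurable_snd S x₀ hx₀
  refine ⟨fun s x => Filter.liminf (fun n => Q (A n (s, x)) s) Filter.atTop, ?_, ?_⟩
  · refine Measurable.liminf fun n => ?_
    exact (A n).measurable_bind (fun x z => Q x z.1) fun x => (hQ x).comp measurable_fst
  · have hQA : ∀ᵐ s ∂μ, ∀ n, ∀ x ∈ (A n).range, P s x = Q x s := by
      refine ae_all_iff.2 fun n => (Filter.eventually_all_finset _).2 fun x hx => ?_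
      obtain ⟨z, rfl⟩ := SimpleFunc.mem_range.1 hx
      exact hPQ _ (SimpleFunc.approxOn_mem measurable_snd hx₀ n z)
    filter_upwards [hQA, hPc] with s hs hc hsD x hx
    simp_rw [← hs _ _ (SimpleFunc.mem_range_self _ _)]
    exact (((hc hsD).tendsto x).comp (SimpleFunc.tendsto_approxOn measurable_snd hx₀
      (subset_closure hx))).liminf_eq

variable {V : Type*} [NormedAddCommGroup V]

theorem enorm_le_eLpNormEssSup_of_continuous [TopologicalSpace X] [ν.IsOpenPosMeasure] {f : X → V}
    (hf : Continuous f) (x : X) : ‖f x‖ₑ ≤ eLpNormEssSup f ν :=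
  (isClosed_le hf.enorm continuous_const).closure_subset
    (Measure.dense_of_ae (enorm_ae_le_eLpNormEssSup f ν) x)

variable [NormedSpace ℝ V] [MetricSpace X] [SecondCountableTopology X] [OpensMeasurableSpace X]

theorem lintegral_enorm_integral_rpow_le_of_continuous [SFinite μ] [SigmaFinite ν]
    {F : α → X → V} {φ : α → ℝ≥0∞} {q : ℝ} (hq : 1 ≤ q) (hF : ∀ᵐ s ∂μ, φ s ≠ ∞ →
      Continuous (F s) ∧ (∫⁻ x, ‖F s x‖ₑ ^ q ∂ν) ^ q⁻¹ ≤ φ s) :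
    (∫⁻ x, ‖∫ s, F s x ∂μ‖ₑ ^ q ∂ν) ^ q⁻¹ ≤ ∫⁻ s, φ s ∂μ := by
  rcases eq_or_ne (∫⁻ s, φ s ∂μ) ∞ with hφ | hφ
  · simp [hφ]
  have hq0 : 0 < q := by linarith
  obtain ⟨g, hg, hgle, hgeq⟩ := exists_measurable_le_lintegral_eq ν fun x => ‖∫ s, F s x ∂μ‖ₑ ^ q
  let S := {x | g x ≠ 0}
  have hS : MeasurableSet S := (measurableSet_eq_fun hg measurable_const).compl
  have hFS : ∀ x ∈ S, AEMeasurable (fun s => ‖F s x‖ₑ) μ := fun x hx => by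
    by_contra hmeas
    have hnint : ¬ Integrable (fun s => F s x) μ := fun h => hmeas h.aestronglyMeasurable.enorm
    exact hx (by simpa [integral_undef hnint, hq0] using hgle x)
  obtain ⟨H, hH, hHF⟩ := exists_measurable_uncurry_eq_of_continuous (D := {s | φ s ≠ ∞}) hFS
    (hF.mono fun s hs hφs => (hs hφs).1.enorm)
  have hHS : Measurable fun z : α × X => S.indicator (H z.1) z.2 :=
    hH.indicator (measurable_snd hS)
  calc (∫⁻ x, ‖∫ s, F s x ∂μ‖ₑ ^ q ∂ν) ^ q⁻¹ = (∫⁻ x, g x ∂ν) ^ q⁻¹ := by rw [hgeq]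
    _ ≤ (∫⁻ x, (∫⁻ s, S.indicator (H s) x ∂μ) ^ q ∂ν) ^ q⁻¹ := by
        gcongr with x
        by_cases hx : x ∈ S
        · have hHx : (fun s => H s x) =ᵐ[μ] fun s => ‖F s x‖ₑ :=
            ae_eq_of_forall_ne_top hφ (by fun_prop) (hFS x hx)
              (hHF.mono fun s hs hφs => hs hφs x hx)
          simp only [Set.indicator_of_mem hx, lintegral_congr_ae hHx]
          exact (hgle x).trans (ENNReal.rpow_le_rpow (enorm_integral_le_lintegral_enorm _) hq0.le)
        · simp [not_not.1 hx]
    _ ≤ ∫⁻ s, (∫⁻ x, S.indicator (H s) x ^ q ∂ν) ^ q⁻¹ ∂μ := lintegral_Lp_lintegral_le hHS hq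
    _ ≤ ∫⁻ s, φ s ∂μ := by
        refine lintegral_mono_ae ?_
        filter_upwards [hF, hHF] with s hs hHs
        rcases eq_or_ne (φ s) ∞ with hφs | hφs
        · simp [hφs]
        refine le_trans ?_ (hs hφs).2
        gcongr with x
        exact Set.indicator_apply_le' (fun hx => (hHs hφs x hx).le) fun _ => zero_le

theorem eLpNorm_integral_le_of_continuous [SFinite μ] [SigmaFinite ν] [ν.IsOpenPosMeasure]
    {F : α → X → V} {φ : α → ℝ≥0∞} {q : ℝ≥0∞} (hq : 1 ≤ q)
    (hF : ∀ᵐ s ∂μ, φ s ≠ ∞ → Continuous (F s) ∧ eLpNorm (F s) q ν ≤ φ s) :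
    eLpNorm (fun x => ∫ s, F s x ∂μ) q ν ≤ ∫⁻ s, φ s ∂μ := by
  rcases eq_or_ne q ∞ with rfl | hq_top
  · refine essSup_le_of_ae_le _ (.of_forall fun x => ?_)
    refine (enorm_integral_le_lintegral_enorm _).trans (lintegral_mono_ae (hF.mono fun s hs => ?_))
    by_cases hφs : φ s = ∞
    · simp [hφs]
    · exact (enorm_le_eLpNormEssSup_of_continuous (hs hφs).1 x).trans (hs hφs).2
  · have hq0 : q ≠ 0 := (one_pos.trans_le hq).ne'
    simp only [eLpNorm_eq_lintegral_rpow_enorm_toReal hq0 hq_top, one_div] at hF ⊢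
    exact lintegral_enorm_integral_rpow_le_of_continuous
      (by simpa using ENNReal.toReal_mono hq_top hq) hF

end Minkowski

section Gaussian

variable {E : Type*} [NormedAddCommGroup E] [InnerProductSpace ℝ E] [FiniteDimensional ℝ E]
  [MeasurableSpace E] [BorelSpace E]

theorem integrable_exp_neg_mul_norm_sq {b : ℝ} (hb : 0 < b) :
    Integrable fun v : E => Real.exp (-b * ‖v‖ ^ 2) := by
  refine .of_integral_ne_zero ?_
  rw [GaussianFourier.integral_rexp_neg_mul_sq_norm hb]
  positivity

theorem eLpNorm_exp_neg_mul_norm_sq {b : ℝ} (hb : 0 < b) {p : ℝ≥0∞} (hp : p ≠ 0) :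
    eLpNorm (fun v : E => Real.exp (-b * ‖v‖ ^ 2)) p =
      ENNReal.ofReal ((π / (b * p.toReal)) ^ (Module.finrank ℝ E / (2 * p.toReal))) := by
  rcases eq_or_ne p ∞ with rfl | hp_top
  · have hcont : Continuous fun v : E => Real.exp (-b * ‖v‖ ^ 2) := by fun_prop
    have hle : ∀ v : E, ‖Real.exp (-b * ‖v‖ ^ 2)‖ₑ ≤ 1 := fun v => by
      rw [Real.enorm_of_nonneg (Real.exp_nonneg _), ENNReal.ofReal_le_one, Real.exp_le_one_iff,
        neg_mul, neg_nonpos]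
      positivity
    simp only [eLpNorm_exponent_top, ENNReal.toReal_top, mul_zero, div_zero, Real.rpow_zero,
      ENNReal.ofReal_one]
    refine le_antisymm (essSup_le_of_ae_le _ (.of_forall hle)) ?_
    simpa using! enorm_le_eLpNormEssSup_of_continuous (ν := volume) hcont 0
  · have hp0 : 0 < p.toReal := ENNReal.toReal_pos hp hp_top
    have hpow : ∀ v : E, ‖Real.exp (-b * ‖v‖ ^ 2)‖ₑ ^ p.toReal =
        ENNReal.ofReal (Real.exp (-(b * p.toReal) * ‖v‖ ^ 2)) := fun v => by
      rw [Real.enorm_of_nonneg (Real.exp_nonneg _), ENNReal.ofReal_rpow_of_nonneg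
        (Real.exp_nonneg _) hp0.le, ← Real.exp_mul]
      ring_nf
    simp_rw [eLpNorm_eq_lintegral_rpow_enorm_toReal hp hp_top, hpow]
    rw [← ofReal_integral_eq_lintegral_ofReal (integrable_exp_neg_mul_norm_sq (by positivity))
      (.of_forall fun v => Real.exp_nonneg _),
      GaussianFourier.integral_rexp_neg_mul_sq_norm (by positivity),
      ENNReal.ofReal_rpow_of_nonneg (by positivity) (by positivity),
      ← Real.rpow_mul (by positivity), div_mul_div_comm, mul_one]

end Gaussian

section HeatKernel

variable {N : ℕ} {t : ℝ}

theorem heatKernel_nonneg (ht : 0 ≤ t) (z : EuclideanSpace ℝ (Fin N)) : 0 ≤ heatKernel N t z := by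
  unfold heatKernel
  positivity

theorem continuous_heatKernel (N : ℕ) (t : ℝ) : Continuous (heatKernel N t) := by
  unfold heatKernel
  fun_prop

theorem gradient_heatKernel (t : ℝ) (z : EuclideanSpace ℝ (Fin N)) :
    gradient (heatKernel N t) z = (-(heatKernel N t z / (2 * t))) • z := by
  refine (hasGradientAt_iff_hasFDerivAt.2 ?_).gradient
  have h := (((hasStrictFDerivAt_norm_sq z).hasFDerivAt.neg.mul_const (4 * t)⁻¹).exp).const_mul
    ((4 * π * t) ^ (-(N : ℝ) / 2))
  refine h.congr_fderiv ?_
  ext v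
  simp only [heatKernel, div_eq_mul_inv, smul_eq_mul, smul_apply, neg_apply,
    InnerProductSpace.toDual_apply_apply, inner_smul_left, innerSL_apply_apply, nsmul_eq_mul,
    mul_inv, Nat.cast_ofNat, neg_mul, Pi.neg_apply, map_neg, map_mul, map_inv₀, conj_trivial]
  ring

theorem continuous_gradient_heatKernel (N : ℕ) (t : ℝ) :
    Continuous (gradient (heatKernel N t)) := by
  have := continuous_heatKernel N t
  rw [funext (gradient_heatKernel t)]
  fun_prop

theorem eLpNorm_heatKernel (ht : 0 < t) {p : ℝ≥0∞} (hp : p ≠ 0) :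
    eLpNorm (heatKernel N t) p volume = ENNReal.ofReal
      (p.toReal ^ (-(N / (2 * p.toReal))) * (4 * π * t) ^ (-(N / 2 * (1 - p.toReal⁻¹)))) := by
  have hexp : heatKernel N t =
      ((4 * π * t) ^ (-(N : ℝ) / 2)) • fun z => Real.exp (-(4 * t)⁻¹ * ‖z‖ ^ 2) := by
    ext z
    simp only [heatKernel, Pi.smul_apply, smul_eq_mul]
    ring_nf
  have hscale : π / ((4 * t)⁻¹ * p.toReal) = p.toReal⁻¹ * (4 * π * t) := by
    simp only [div_eq_mul_inv, mul_inv, inv_inv]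
    ring
  rw [hexp, eLpNorm_const_smul, eLpNorm_exp_neg_mul_norm_sq (by positivity) hp,
    Real.enorm_of_nonneg (by positivity), ← ENNReal.ofReal_mul (by positivity),
    finrank_euclideanSpace_fin, hscale,
    Real.mul_rpow (x := p.toReal⁻¹) (by positivity) (by positivity),
    Real.inv_rpow (by positivity), ← Real.rpow_neg (by positivity), mul_left_comm,
    ← Real.rpow_add (by positivity)]
  congr 3
  ring

theorem memLp_heatKernel (ht : 0 < t) {p : ℝ≥0∞} (hp : p ≠ 0) : MemLp (heatKernel N t) p :=
  ⟨(continuous_heatKernel N t).aestronglyMeasurable,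
    eLpNorm_heatKernel ht hp ▸ ENNReal.ofReal_lt_top⟩

theorem heatKernel_eq_mul_heatKernel_two_mul (ht : 0 < t) (z : EuclideanSpace ℝ (Fin N)) :
    heatKernel N t z =
      2 ^ (N / 2 : ℝ) * Real.exp (-‖z‖ ^ 2 / (8 * t)) * heatKernel N (2 * t) z := by
  have hexp : -‖z‖ ^ 2 / (4 * t) = -‖z‖ ^ 2 / (8 * t) + -‖z‖ ^ 2 / (4 * (2 * t)) := by
    field_simp
    ring
  have hscale : (4 * π * (2 * t)) ^ (-(N : ℝ) / 2) =
      (2 ^ (N / 2 : ℝ))⁻¹ * (4 * π * t) ^ (-(N : ℝ) / 2) := by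
    rw [mul_left_comm, Real.mul_rpow (by positivity) (by positivity), neg_div,
      Real.rpow_neg zero_le_two]
  rw [heatKernel, heatKernel, hexp, Real.exp_add, hscale]
  field_simp

theorem heatKernel_le_mul_heatKernel_two_mul (ht : 0 < t) (z w : EuclideanSpace ℝ (Fin N)) :
    heatKernel N t z ≤
      2 ^ (N / 2 : ℝ) * Real.exp (‖z - w‖ ^ 2 / (4 * t)) * heatKernel N (2 * t) w := by
  have hpar : ‖w‖ ^ 2 ≤ 2 * ‖z‖ ^ 2 + 2 * ‖z - w‖ ^ 2 := by
    have := parallelogram_law_with_norm ℝ z (z - w)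
    rw [sub_sub_cancel] at this
    nlinarith [sq_nonneg ‖z + (z - w)‖]
  have hexp : Real.exp (-‖z‖ ^ 2 / (8 * t)) * Real.exp (-‖z‖ ^ 2 / (4 * (2 * t))) ≤
      Real.exp (‖z - w‖ ^ 2 / (4 * t)) * Real.exp (-‖w‖ ^ 2 / (4 * (2 * t))) := by
    rw [← Real.exp_add, ← Real.exp_add, Real.exp_le_exp]
    field_simp
    linarith
  calc heatKernel N t z = 2 ^ (N / 2 : ℝ) * (4 * π * (2 * t)) ^ (-(N : ℝ) / 2) *
        (Real.exp (-‖z‖ ^ 2 / (8 * t)) * Real.exp (-‖z‖ ^ 2 / (4 * (2 * t)))) := by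
          rw [heatKernel_eq_mul_heatKernel_two_mul ht, heatKernel]
          ring
    _ ≤ 2 ^ (N / 2 : ℝ) * (4 * π * (2 * t)) ^ (-(N : ℝ) / 2) *
        (Real.exp (‖z - w‖ ^ 2 / (4 * t)) * Real.exp (-‖w‖ ^ 2 / (4 * (2 * t)))) := by gcongr
    _ = _ := by
          rw [heatKernel]
          ring

theorem norm_gradient_heatKernel_le (ht : 0 < t) (z : EuclideanSpace ℝ (Fin N)) :
    ‖gradient (heatKernel N t) z‖ ≤
      2 ^ (N / 2 : ℝ) * t ^ (-1 / 2 : ℝ) * heatKernel N (2 * t) z := by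
  have hK := heatKernel_nonneg (by positivity : 0 ≤ 2 * t) z
  have hnorm : ‖z‖ / (2 * t) ≤ t ^ (-1 / 2 : ℝ) * Real.exp (‖z‖ ^ 2 / (8 * t)) := by
    obtain ⟨w, hw⟩ : ∃ w, ‖z‖ = √t * w := ⟨‖z‖ / √t, by field_simp⟩
    have hle : w / 2 ≤ Real.exp (w ^ 2 / 8) := by
      linarith [Real.add_one_le_exp (w ^ 2 / 8), sq_nonneg (w - 2)]
    have hhalf : t ^ (-1 / 2 : ℝ) = (√t)⁻¹ := by
      rw [neg_div, Real.rpow_neg ht.le, Real.sqrt_eq_rpow]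
    calc ‖z‖ / (2 * t) = (√t)⁻¹ * (w / 2) := by
          rw [hw]
          field_simp
          rw [Real.sq_sqrt ht.le, mul_comm]
      _ ≤ (√t)⁻¹ * Real.exp (w ^ 2 / 8) := by gcongr
      _ = _ := by
          rw [hhalf, hw, mul_pow, Real.sq_sqrt ht.le]
          field_simp
  calc ‖gradient (heatKernel N t) z‖
      = ‖z‖ / (2 * t) * heatKernel N t z := by
        rw [gradient_heatKernel, norm_smul, norm_neg, Real.norm_of_nonneg
          (div_nonneg (heatKernel_nonneg ht.le z) (by positivity))]
        ring
    _ = 2 ^ (N / 2 : ℝ) * (‖z‖ / (2 * t) * Real.exp (-‖z‖ ^ 2 / (8 * t))) *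
          heatKernel N (2 * t) z := by
        rw [heatKernel_eq_mul_heatKernel_two_mul ht]
        ring
    _ ≤ 2 ^ (N / 2 : ℝ) * (t ^ (-1 / 2 : ℝ) * Real.exp (‖z‖ ^ 2 / (8 * t)) *
          Real.exp (-‖z‖ ^ 2 / (8 * t))) * heatKernel N (2 * t) z := by gcongr
    _ = _ := by
        rw [mul_assoc (t ^ _), ← Real.exp_add, neg_div _ (‖z‖ ^ 2), add_neg_cancel, Real.exp_zero,
          mul_one]

theorem norm_gradient_heatKernel_le_of_norm_sub_le (ht : 0 < t) {z w : EuclideanSpace ℝ (Fin N)}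
    {δ : ℝ} (hzw : ‖z - w‖ ≤ δ) :
    ‖gradient (heatKernel N t) z‖ ≤
      2 ^ (N : ℝ) * t ^ (-1 / 2 : ℝ) * Real.exp (δ ^ 2 / (8 * t)) * heatKernel N (4 * t) w := by
  have hK := heatKernel_nonneg (by positivity : 0 ≤ 4 * t) w
  calc ‖gradient (heatKernel N t) z‖
      ≤ 2 ^ (N / 2 : ℝ) * t ^ (-1 / 2 : ℝ) * heatKernel N (2 * t) z :=
        norm_gradient_heatKernel_le ht z
    _ ≤ 2 ^ (N / 2 : ℝ) * t ^ (-1 / 2 : ℝ) * (2 ^ (N / 2 : ℝ) *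
          Real.exp (‖z - w‖ ^ 2 / (4 * (2 * t))) * heatKernel N (2 * (2 * t)) w) := by
        gcongr
        exact heatKernel_le_mul_heatKernel_two_mul (by positivity) z w
    _ = 2 ^ (N : ℝ) * t ^ (-1 / 2 : ℝ) * Real.exp (‖z - w‖ ^ 2 / (8 * t)) *
          heatKernel N (4 * t) w := by
        rw [← add_halves (N : ℝ), Real.rpow_add two_pos, add_halves]
        ring_nf
    _ ≤ _ := by gcongr

theorem exists_eLpNorm_gradient_heatKernel_le (N : ℕ) {p : ℝ≥0∞} (hp : p ≠ 0) :
    ∃ C > 0, ∀ t > 0, eLpNorm (gradient (heatKernel N t)) p volume ≤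
      ENNReal.ofReal (C * t ^ (-(1 / 2 + N / 2 * (1 - p.toReal⁻¹)))) := by
  have hpow : 0 < p.toReal ^ (-(N / (2 * p.toReal))) := by
    rcases eq_or_ne p ∞ with rfl | hp_top
    · simp
    · have := ENNReal.toReal_pos hp hp_top
      positivity
  refine ⟨2 ^ (N / 2 : ℝ) * (p.toReal ^ (-(N / (2 * p.toReal))) *
    (4 * π * 2) ^ (-(N / 2 * (1 - p.toReal⁻¹)))), by positivity, fun t ht => ?_⟩
  have hle : ∀ z, ‖gradient (heatKernel N t) z‖ ≤
      2 ^ (N / 2 : ℝ) * t ^ (-1 / 2 : ℝ) * ‖heatKernel N (2 * t) z‖ := fun z => by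
    rw [Real.norm_of_nonneg (heatKernel_nonneg (by positivity) z)]
    exact norm_gradient_heatKernel_le ht z
  refine (eLpNorm_le_mul_eLpNorm_of_ae_le_mul (.of_forall hle) p).trans_eq ?_
  rw [eLpNorm_heatKernel (by positivity) hp, ← ENNReal.ofReal_mul (by positivity),
    ← mul_assoc _ 2, Real.mul_rpow (x := 4 * π * 2) (by positivity) ht.le, neg_add,
    Real.rpow_add ht, neg_div]
  ring_nf

theorem gradient_heatKernel_ne_zero (ht : 0 < t) {z : EuclideanSpace ℝ (Fin N)} (hz : z ≠ 0) :
    gradient (heatKernel N t) z ≠ 0 := by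
  rw [gradient_heatKernel]
  refine smul_ne_zero (neg_ne_zero.2 ?_) hz
  unfold heatKernel
  positivity

end HeatKernel

section GradHeatSemigroup

theorem aestronglyMeasurable_of_smul_of_ae_ne_zero {α E : Type*} [MeasurableSpace α]
    {μ : Measure α} [NormedAddCommGroup E] [InnerProductSpace ℝ E] {f : α → ℝ} {G : α → E}
    (hfG : AEStronglyMeasurable (fun y => f y • G y) μ) (hG : AEStronglyMeasurable G μ)
    (hG₀ : ∀ᵐ y ∂μ, G y ≠ 0) : AEStronglyMeasurable f μ := by
  refine ((hfG.inner hG).aemeasurable.div (hG.inner hG).aemeasurable).aestronglyMeasurable.congr ?_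
  filter_upwards [hG₀] with y hy
  simp only [Pi.div_apply, real_inner_smul_left]
  exact mul_div_cancel_right₀ _ (inner_self_ne_zero.2 hy)

variable {N : ℕ} {t : ℝ} {f : EuclideanSpace ℝ (Fin N) → ℝ}

/-- The operator `∇e^{tΔ}`, convolution with the gradient of the heat kernel. The operator `B` of
`heatOpB` is `B f (t) = ∫₀ᵗ ∇e^{(t-s)Δ} f(s) ds`, by definition. -/
def gradHeatSemigroup (t : ℝ) (f : EuclideanSpace ℝ (Fin N) → ℝ) (x : EuclideanSpace ℝ (Fin N)) :
    EuclideanSpace ℝ (Fin N) :=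
  ∫ y, f y • gradient (heatKernel N t) (x - y)

theorem gradHeatSemigroup_of_not_aestronglyMeasurable [NeZero N] (ht : 0 < t)
    (hf : ¬ AEStronglyMeasurable f) : gradHeatSemigroup t f = 0 := by
  ext1 x
  refine integral_undef fun h => hf ?_
  have hG : Continuous fun y => gradient (heatKernel N t) (x - y) :=
    (continuous_gradient_heatKernel N t).comp (by fun_prop)
  refine aestronglyMeasurable_of_smul_of_ae_ne_zero h.1 hG.aestronglyMeasurable ?_
  filter_upwards [compl_mem_ae_iff.2 (measure_singleton x)] with y hy
  exact gradient_heatKernel_ne_zero ht (sub_ne_zero.2 (Ne.symm hy))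

theorem enorm_gradHeatSemigroup_le (t : ℝ) (f : EuclideanSpace ℝ (Fin N) → ℝ)
    (x : EuclideanSpace ℝ (Fin N)) : ‖gradHeatSemigroup t f x‖ₑ ≤
      ((fun y => ‖f y‖ₑ) ⋆ₗ fun z => ‖gradient (heatKernel N t) z‖ₑ) x := by
  simp only [lconvolution_def, neg_add_eq_sub, ← enorm_smul]
  exact enorm_integral_le_lintegral_enorm _

theorem exists_eLpNorm_gradHeatSemigroup_le (N : ℕ) [NeZero N] {q₁ q₂ : ℝ≥0∞} (hq₁ : 1 ≤ q₁)
    (hq₁₂ : q₁ ≤ q₂) :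
    ∃ C > 0, ∀ t > 0, ∀ f : EuclideanSpace ℝ (Fin N) → ℝ,
      eLpNorm (gradHeatSemigroup t f) q₂ volume ≤
        ENNReal.ofReal (C * t ^ (-(1 / 2 + N / 2 * (q₁.toReal⁻¹ - q₂.toReal⁻¹)))) *
          eLpNorm f q₁ volume := by
  obtain ⟨p, hp, hpq⟩ : ∃ p : ℝ≥0∞, 1 ≤ p ∧ q₁⁻¹ + p⁻¹ = 1 + q₂⁻¹ := by
    refine ⟨(1 + q₂⁻¹ - q₁⁻¹)⁻¹, ?_, ?_⟩
    · rw [ENNReal.one_le_inv, tsub_le_iff_right]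
      gcongr
    · rw [inv_inv, add_tsub_cancel_of_le]
      exact (ENNReal.inv_le_one.2 hq₁).trans le_self_add
  have hp_real : 1 - p.toReal⁻¹ = q₁.toReal⁻¹ - q₂.toReal⁻¹ := by
    have hq₁_inv := ENNReal.inv_ne_top.2 (one_pos.trans_le hq₁).ne'
    have hq₂_inv := ENNReal.inv_ne_top.2 (one_pos.trans_le (hq₁.trans hq₁₂)).ne'
    have hp_inv := ENNReal.inv_ne_top.2 (one_pos.trans_le hp).ne'
    have := congrArg ENNReal.toReal hpq
    rw [ENNReal.toReal_add hq₁_inv hp_inv, ENNReal.toReal_add ENNReal.one_ne_top hq₂_inv,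
      ENNReal.toReal_one] at this
    simp only [ENNReal.toReal_inv] at this
    linarith
  obtain ⟨C, hC, hgrad⟩ := exists_eLpNorm_gradient_heatKernel_le N (one_pos.trans_le hp).ne'
  rw [hp_real] at hgrad
  refine ⟨C, hC, fun t ht f => ?_⟩
  by_cases hf : AEStronglyMeasurable f
  · have hG : AEMeasurable fun z => ‖gradient (heatKernel N t) z‖ₑ :=
      (continuous_gradient_heatKernel N t).enorm.aemeasurable
    calc eLpNorm (gradHeatSemigroup t f) q₂ volume
        ≤ eLpNorm ((fun y => ‖f y‖ₑ) ⋆ₗ fun z => ‖gradient (heatKernel N t) z‖ₑ) q₂ volume :=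
          eLpNorm_mono_enorm fun x => enorm_gradHeatSemigroup_le t f x
      _ ≤ eLpNorm (fun y => ‖f y‖ₑ) q₁ volume *
            eLpNorm (fun z => ‖gradient (heatKernel N t) z‖ₑ) p volume :=
          eLpNorm_lconvolution_le hf.enorm hG hq₁ hp hpq
      _ ≤ _ := by
          rw [eLpNorm_enorm, eLpNorm_enorm, mul_comm]
          grw [hgrad t ht]
  · rw [gradHeatSemigroup_of_not_aestronglyMeasurable ht hf, eLpNorm_zero]
    exact zero_le

theorem continuous_gradHeatSemigroup [NeZero N] (ht : 0 < t) {q : ℝ≥0∞} (hq : 1 ≤ q)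
    (hf : eLpNorm f q volume ≠ ∞) : Continuous (gradHeatSemigroup t f) := by
  by_cases hfm : AEStronglyMeasurable f
  swap
  · rw [gradHeatSemigroup_of_not_aestronglyMeasurable ht hfm]
    exact continuous_zero
  have hG := continuous_gradient_heatKernel N t
  have hfK : ∀ x, Integrable fun y => ‖f y‖ * heatKernel N (4 * t) (x - y) := fun x => by
    have := ENNReal.HolderConjugate.conjExponent hq
    have hK : MemLp (heatKernel N (4 * t)) q.conjExponent :=
      memLp_heatKernel (by positivity) (ENNReal.HolderConjugate.ne_zero _ q)
    have hf' : MemLp f q := ⟨hfm, hf.lt_top⟩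
    exact hf'.norm.integrable_mul
      (hK.comp_measurePreserving (Measure.measurePreserving_sub_left _ x))
  refine continuous_iff_continuousAt.2 fun x₀ => continuousAt_of_dominated (.of_forall fun x => ?_)
    ?_ ((hfK x₀).const_mul (2 ^ (N : ℝ) * t ^ (-1 / 2 : ℝ) * Real.exp (1 ^ 2 / (8 * t))))
    (.of_forall fun y => ?_)
  · exact hfm.smul (hG.comp (by fun_prop)).aestronglyMeasurable
  · filter_upwards [Metric.closedBall_mem_nhds x₀ one_pos] with x hx
    refine .of_forall fun y => ?_
    have hxy : ‖(x - y) - (x₀ - y)‖ ≤ 1 := by simpa [dist_eq_norm] using hx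
    grw [norm_smul, norm_gradient_heatKernel_le_of_norm_sub_le ht hxy, mul_left_comm]
  · have : Continuous fun x => f y • gradient (heatKernel N t) (x - y) := by fun_prop
    exact this.continuousAt

end GradHeatSemigroup

section DuhamelOperator

variable {N : ℕ} {q₁ q₂ T : ℝ≥0∞}

theorem exists_eLpNorm_heatOpB_le (N : ℕ) [NeZero N] (hq₁ : 1 ≤ q₁) (hq₁₂ : q₁ ≤ q₂) :
    ∃ C : ℝ, ∀ (f : ℝ → EuclideanSpace ℝ (Fin N) → ℝ) (t : ℝ),
      eLpNorm (heatOpB f t) q₂ volume ≤ ENNReal.ofReal C * ∫⁻ s in Set.Ioo 0 t,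
        ENNReal.ofReal ((t - s) ^ (-(1 / 2 + N / 2 * (q₁.toReal⁻¹ - q₂.toReal⁻¹)))) *
          eLpNorm (f s) q₁ volume := by
  obtain ⟨C, hC, hsmooth⟩ := exists_eLpNorm_gradHeatSemigroup_le N hq₁ hq₁₂
  refine ⟨C, fun f t => ?_⟩
  simp_rw [← lintegral_const_mul' _ _ ENNReal.ofReal_ne_top, ← mul_assoc,
    ← ENNReal.ofReal_mul hC.le]
  refine eLpNorm_integral_le_of_continuous (F := fun s => gradHeatSemigroup (t - s) (f s))
    (hq₁.trans hq₁₂) ?_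
  filter_upwards [ae_restrict_mem measurableSet_Ioo] with s hs hφ
  have hts : 0 < t - s := sub_pos.2 hs.2
  refine ⟨continuous_gradHeatSemigroup hts hq₁ fun htop => hφ ?_, hsmooth _ hts _⟩
  rw [htop, ENNReal.mul_top (ENNReal.ofReal_pos.2 (by positivity)).ne']

theorem lintegral_const_mul_rpow_rpow_inv {α : Type*} [MeasurableSpace α] {μ : Measure α} {r : ℝ}
    (hr : 0 < r) {c : ℝ≥0∞} (hc : c ≠ ∞) (g : α → ℝ≥0∞) :
    (∫⁻ t, (c * g t) ^ r ∂μ) ^ r⁻¹ = c * (∫⁻ t, g t ^ r ∂μ) ^ r⁻¹ := by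
  simp_rw [ENNReal.mul_rpow_of_nonneg _ _ hr.le]
  rw [lintegral_const_mul' _ _ (ENNReal.rpow_ne_top_of_nonneg hr.le hc),
    ENNReal.mul_rpow_of_nonneg _ _ (inv_nonneg.2 hr.le), ENNReal.rpow_rpow_inv hr.ne']

/-- The spatial norm `t ↦ ‖f(t)‖_{L^q}` extended by zero outside `(0, T)`, so that
`mixedNorm r q T f` is its `L^r` norm on the whole line. -/
def spatialNorm {F : Type*} [NormedAddCommGroup F] (q T : ℝ≥0∞)
    (f : ℝ → EuclideanSpace ℝ (Fin N) → F) : ℝ → ℝ≥0∞ :=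
  {t : ℝ | 0 < t ∧ ENNReal.ofReal t < T}.indicator fun t => eLpNorm (f t) q volume

theorem mixedNorm_eq_lintegral_spatialNorm {F : Type*} [NormedAddCommGroup F] {r : ℝ} (hr : 0 < r)
    (q T : ℝ≥0∞) (f : ℝ → EuclideanSpace ℝ (Fin N) → F) :
    mixedNorm r q T f = (∫⁻ t, spatialNorm q T f t ^ r) ^ r⁻¹ := by
  have hmeas : MeasurableSet {t : ℝ | 0 < t ∧ ENNReal.ofReal t < T} :=
    measurableSet_Ioi.inter (measurableSet_lt ENNReal.measurable_ofReal measurable_const)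
  rw [mixedNorm, one_div, ← lintegral_indicator hmeas]
  congr with t
  by_cases ht : 0 < t ∧ ENNReal.ofReal t < T <;> simp [spatialNorm, ht, hr]

theorem exists_spatialNorm_heatOpB_le (N : ℕ) [NeZero N] (hq₁ : 1 ≤ q₁) (hq₁₂ : q₁ ≤ q₂) :
    ∃ C : ℝ, ∀ (T : ℝ≥0∞) (f : ℝ → EuclideanSpace ℝ (Fin N) → ℝ) (t : ℝ),
      spatialNorm q₂ T (heatOpB f) t ≤ ENNReal.ofReal C * (spatialNorm q₁ T f ⋆ₗ
        riemannLiouvilleKernel (1 / 2 + N / 2 * (q₁.toReal⁻¹ - q₂.toReal⁻¹))) t := by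
  obtain ⟨C, hC⟩ := exists_eLpNorm_heatOpB_le N hq₁ hq₁₂
  refine ⟨C, fun T f t => Set.indicator_apply_le' (fun ht => (hC f t).trans ?_) fun _ => zero_le⟩
  rw [lconvolution_def, ← lintegral_indicator measurableSet_Ioo]
  gcongr with s
  refine Set.indicator_apply_le' (fun hs => le_of_eq ?_) fun _ => zero_le
  have hsT : s ∈ {t : ℝ | 0 < t ∧ ENNReal.ofReal t < T} :=
    ⟨hs.1, (ENNReal.ofReal_le_ofReal hs.2.le).trans_lt ht.2⟩
  have hts : -s + t ∈ Set.Ioi 0 := by simpa using hs.2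
  rw [spatialNorm, riemannLiouvilleKernel, Set.indicator_of_mem hsT, Set.indicator_of_mem hts,
    mul_comm, neg_add_eq_sub]

end DuhamelOperator

/-- Lemma 2: if `(N/2)(1/q₁ - 1/q₂) + 1/2 < 1` and `1/r₁ + (N/2)(1/q₁ - 1/q₂) = 1/2 + 1/r₂`,
then `B` is bounded from `L^{r₁}(0,T;L^{q₁})` to `L^{r₂}(0,T;L^{q₂})`. -/
theorem heatOpB_bounded (N : ℕ) (hN : 0 < N) (T : ℝ≥0∞) (hT : 0 < T)
    (r₁ r₂ : ℝ) (q₁ q₂ : ℝ≥0∞)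
    (hr₁ : 1 < r₁) (hr₂ : 1 < r₂) (hq₁ : 1 ≤ q₁) (hq₁₂ : q₁ ≤ q₂)
    (hcond : (N : ℝ) / 2 * (1 / q₁.toReal - 1 / q₂.toReal) + 1 / 2 < 1)
    (hscal : 1 / r₁ + (N : ℝ) / 2 * (1 / q₁.toReal - 1 / q₂.toReal) = 1 / 2 + 1 / r₂) :
    ∃ C > 0, ∀ f : ℝ → EuclideanSpace ℝ (Fin N) → ℝ,
      mixedNorm r₂ q₂ T (heatOpB f) ≤ ENNReal.ofReal C * mixedNorm r₁ q₁ T f := by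
  have : NeZero N := ⟨hN.ne'⟩
  simp only [one_div] at hcond hscal
  obtain ⟨K, hK⟩ := exists_spatialNorm_heatOpB_le N hq₁ hq₁₂
  set β : ℝ := 1 / 2 + N / 2 * (q₁.toReal⁻¹ - q₂.toReal⁻¹) with hβ
  have hr₁_inv : r₁⁻¹ < 1 := inv_lt_one_of_one_lt₀ hr₁
  have hr₂₀ : 0 < r₂ := by linarith
  have hr₂_inv : 0 < r₂⁻¹ := inv_pos.2 hr₂₀
  obtain ⟨D, hD, hHLS⟩ := exists_lconvolution_riemannLiouvilleKernel_le (β := β) (p := r₁)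
    (r := r₂) (by linarith) (by linarith) hr₁ hr₂₀ (by linarith)
  refine ⟨max (K * D.toReal) 1, by positivity, fun f => ?_⟩
  rw [mixedNorm_eq_lintegral_spatialNorm hr₂₀, mixedNorm_eq_lintegral_spatialNorm (by linarith)]
  calc (∫⁻ t, spatialNorm q₂ T (heatOpB f) t ^ r₂) ^ r₂⁻¹
      ≤ (∫⁻ t, (ENNReal.ofReal K *
          (spatialNorm q₁ T f ⋆ₗ riemannLiouvilleKernel β) t) ^ r₂) ^ r₂⁻¹ := by
        gcongr with t
        exact hK T f t
    _ ≤ ENNReal.ofReal (K * D.toReal) * (∫⁻ s, spatialNorm q₁ T f s ^ r₁) ^ r₁⁻¹ := by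
        rw [lintegral_const_mul_rpow_rpow_inv hr₂₀ ENNReal.ofReal_ne_top,
          ENNReal.ofReal_mul' ENNReal.toReal_nonneg, ENNReal.ofReal_toReal hD, mul_assoc]
        grw [hHLS]
    _ ≤ _ := by grw [← le_max_left]
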